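/- Let q be a prime power and n a positive integer with gcd(n,q)=1. Let δ ≥ 2 and let d be an integer with δ+1 ≤ d ≤ 2δ, and let r ≥ d-δ+1 be an integer such that (r+δ-1) divides gcd(n, q-1) and gcd(n/(r+δ-1), r+δ-1) = 1. Then there exists a q-ary cyclic code C of length n, dimension k = rn/(r+δ-1) - (d-δ), and minimum distance d, such that C has (r,δ)-locality and d = n - k + 1 - (⌈k/r⌉ - 1)(δ - 1) (i.e., C is an optimal (r,δ)-LRC achieving the Singleton-type bound). -/

import Mathlib

open Polynomial
open scoped Classical

/-- Hamming weight of a vector. -/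
noncomputable def wt {F : Type*} [Field F] {n : ℕ} (v : Fin n → F) : ℕ :=
  (Finset.univ.filter (fun i => v i ≠ 0)).card

/-- The minimum distance of the code `Cset` is at least `d`. -/
def MinDistGe {F : Type*} [Field F] {n : ℕ} (Cset : Set (Fin n → F)) (d : ℕ) : Prop :=
  ∀ v ∈ Cset, v ≠ 0 → d ≤ wt v

/-- The minimum distance of the code `Cset` is exactly `d`. -/
def MinDistIs {F : Type*} [Field F] {n : ℕ} (Cset : Set (Fin n → F)) (d : ℕ) : Prop :=
  MinDistGe Cset d ∧ ∃ v ∈ Cset, v ≠ 0 ∧ wt v = d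

/-- The code `Cset` has `(r, δ)`-locality: every coordinate `i` lies in a repair set `R`
of size at most `r + δ - 1` such that the code punctured to `R` has minimum distance `≥ δ`. -/
def HasLocality {F : Type*} [Field F] {n : ℕ} (Cset : Set (Fin n → F)) (r δ : ℕ) : Prop :=
  ∀ i : Fin n, ∃ R : Finset (Fin n), i ∈ R ∧ R.card ≤ r + δ - 1 ∧
    ∀ v ∈ Cset, (∃ j ∈ R, v j ≠ 0) → δ ≤ (R.filter (fun j => v j ≠ 0)).card

/-- A linear code is cyclic if it is closed under the cyclic shift
`(c_0, ..., c_{n-1}) ↦ (c_{n-1}, c_0, ..., c_{n-2})`. -/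
def IsCyclic' {F : Type*} [Field F] {n : ℕ} [NeZero n] (C : Submodule F (Fin n → F)) : Prop :=
  ∀ v ∈ C, (fun i : Fin n => v (i - 1)) ∈ C

/-- Singleton-type optimality for an `[n,k,d]` `(r,δ)`-LRC:
`d = n - k + 1 - (⌈k/r⌉ - 1)(δ - 1)`. -/
def IsOptimalParams (n k d r δ : ℕ) : Prop :=
  (d : ℤ) = (n : ℤ) - (k : ℤ) + 1 - (⌈(k : ℚ) / (r : ℚ)⌉ - 1) * ((δ : ℤ) - 1)

section CyclicLRC

variable {F : Type*} [Field F]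

/-- The polynomial `∑ i, v i * X ^ i` attached to a word `v`. -/
noncomputable def wordPoly {n : ℕ} (v : Fin n → F) : F[X] :=
  ∑ i : Fin n, C (v i) * X ^ (i : ℕ)

lemma coeff_wordPoly {n : ℕ} (v : Fin n → F) (k : ℕ) :
    (wordPoly v).coeff k = if h : k < n then v ⟨k, h⟩ else 0 := by
  simp only [wordPoly, finsetSum_coeff, coeff_C_mul, coeff_X_pow]
  split_ifs with h
  · rw [Finset.sum_eq_single ⟨k, h⟩]
    · simp
    · intro b _ hb
      have : k ≠ b := fun hk => hb (Fin.ext hk.symm)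
      simp [this]
    · simp
  · refine Finset.sum_eq_zero fun i _ => ?_
    have : k ≠ i := by have := i.2; omega
    simp [this]

lemma wordPoly_coeff {n : ℕ} {p : F[X]} (hp : p.degree < n) :
    wordPoly (fun i : Fin n => p.coeff i) = p := by
  ext k
  rw [coeff_wordPoly]
  split_ifs with h
  · rfl
  · exact (coeff_eq_zero_of_degree_lt (hp.trans_le (by exact_mod_cast not_lt.1 h))).symm

lemma degree_wordPoly_lt {n : ℕ} (v : Fin n → F) : (wordPoly v).degree < n := by
  rw [degree_lt_iff_coeff_zero]
  intro k hk
  simp [coeff_wordPoly, not_lt.2 hk]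

/-- The words of length `n` whose polynomial is a multiple of a monic `g` form a code of
dimension `n - deg g`. -/
lemma exists_submodule_of_monic {n : ℕ} {g : F[X]} (hg : g.Monic) (hgn : g.natDegree ≤ n) :
    ∃ K : Submodule F (Fin n → F), Module.finrank F K = n - g.natDegree ∧
      ∀ v, v ∈ K ↔ g ∣ wordPoly v := by
  set k := n - g.natDegree with hk
  let φ : degreeLT F k →ₗ[F] (Fin n → F) :=
    { toFun := fun p i => (g * (p : F[X])).coeff i
      map_add' := fun p q => by ext i; simp [mul_add]
      map_smul' := fun c p => by ext i; simp }
  have hdeg : ∀ p : F[X], p.degree < k → (g * p).degree < n := by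
    intro p hp
    by_cases hp0 : p = 0
    · simp [hp0]
    rw [degree_lt_iff_coeff_zero]
    intro j hj
    apply coeff_eq_zero_of_natDegree_lt
    rw [hg.natDegree_mul' hp0]
    have := (natDegree_lt_iff_degree_lt hp0).2 hp
    omega
  have hinj : Function.Injective φ := by
    rw [injective_iff_map_eq_zero]
    rintro ⟨p, hp⟩ h
    have h1 := wordPoly_coeff (hdeg p (mem_degreeLT.1 hp))
    have h2 : (fun i : Fin n => (g * p).coeff i) = 0 := h
    rw [h2] at h1
    have h3 : g * p = 0 := by rw [← h1]; simp [wordPoly]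
    have h4 := (mul_eq_zero.1 h3).resolve_left hg.ne_zero
    exact Subtype.ext h4
  refine ⟨LinearMap.range φ, ?_, fun v => ⟨?_, ?_⟩⟩
  · rw [LinearMap.finrank_range_of_inj hinj, (degreeLTEquiv F k).finrank_eq]
    simp
  · rintro ⟨⟨p, hp⟩, rfl⟩
    have h1 : wordPoly (φ ⟨p, hp⟩) = g * p := wordPoly_coeff (hdeg p (mem_degreeLT.1 hp))
    exact h1 ▸ dvd_mul_right _ _
  · rintro ⟨p, hp⟩
    have hpd : p ∈ degreeLT F k := by
      rw [mem_degreeLT]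
      by_cases hp0 : p = 0
      · simp [hp0]
      have h1 := degree_wordPoly_lt v
      rw [hp, ← natDegree_lt_iff_degree_lt (mul_ne_zero hg.ne_zero hp0),
        hg.natDegree_mul' hp0] at h1
      rw [← natDegree_lt_iff_degree_lt hp0]
      omega
    refine ⟨⟨p, hpd⟩, ?_⟩
    ext i
    change (g * p).coeff i = v i
    rw [← hp, coeff_wordPoly]
    simp

lemma wordPoly_shift {n : ℕ} [NeZero n] (v : Fin n → F) :
    wordPoly (fun i : Fin n => v (i - 1)) =
      X * wordPoly v - C (v (-1)) * (X ^ n - 1) := by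
  obtain ⟨m, rfl⟩ : ∃ m, n = m + 1 := ⟨n - 1, by have := NeZero.pos n; omega⟩
  have hlast : (-1 : Fin (m + 1)) = Fin.last m := by
    exact neg_eq_of_add_eq_zero_left (Fin.last_add_one m)
  have h1 : ∀ i : Fin m, i.succ - 1 = i.castSucc := by
    intro i; rw [sub_eq_iff_eq_add]; simp
  rw [wordPoly, wordPoly, Fin.sum_univ_succ, Fin.sum_univ_castSucc]
  simp only [h1, zero_sub, hlast, mul_add, Finset.mul_sum, Fin.val_succ, Fin.val_castSucc,
    Fin.val_last, Fin.val_zero]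
  have : ∀ i : Fin m, C (v i.castSucc) * X ^ ((i : ℕ) + 1) =
      X * (C (v i.castSucc) * X ^ (i : ℕ)) := fun i => by ring
  rw [Finset.sum_congr rfl fun i _ => this i]
  ring

/-- A BCH-type bound: a nonzero word orthogonal to the powers `1, …, s` of distinct nonzero
evaluation points has weight greater than `s`. -/
lemma lt_card_support_of_power_sums {ι : Type*} (T : Finset ι) (w x : ι → F) (s : ℕ)
    (hx : Set.InjOn x T) (hx0 : ∀ t ∈ T, x t ≠ 0)
    (hsum : ∀ j, 1 ≤ j → j ≤ s → ∑ t ∈ T, w t * x t ^ j = 0)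
    (hw : ∃ t ∈ T, w t ≠ 0) : s < (T.filter fun t => w t ≠ 0).card := by
  by_contra! hcard
  obtain ⟨u, huT, hu⟩ := hw
  set S := T.filter fun t => w t ≠ 0 with hS
  have huS : u ∈ S := by simp [hS, huT, hu]
  set Q : F[X] := X * ∏ t ∈ S.erase u, (X - C (x t)) with hQ
  have hdeg : Q.natDegree ≤ s := by
    rw [hQ, natDegree_X_mul (Finset.prod_ne_zero_iff.2 fun t _ => X_sub_C_ne_zero _),
      natDegree_finsetProd_X_sub_C_eq_card, Finset.card_erase_of_mem huS]
    have : 0 < S.card := Finset.card_pos.2 ⟨u, huS⟩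
    omega
  have hzero : ∑ t ∈ T, w t * Q.eval (x t) = 0 := by
    simp_rw [eval_eq_sum_range' (Nat.lt_succ_of_le hdeg), Finset.mul_sum]
    rw [Finset.sum_comm]
    refine Finset.sum_eq_zero fun j hj => ?_
    rcases Nat.eq_zero_or_pos j with rfl | hj0
    · simp [hQ]
    · have := hsum j hj0 (by simpa [Nat.lt_succ_iff] using hj)
      calc _ = Q.coeff j * ∑ t ∈ T, w t * x t ^ j := by
            rw [Finset.mul_sum]; exact Finset.sum_congr rfl fun t _ => by ring
        _ = 0 := by rw [this, mul_zero]
  rw [Finset.sum_eq_single_of_mem u huT] at hzero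
  · rw [hQ, eval_mul, eval_X, eval_prod] at hzero
    refine mul_ne_zero hu (mul_ne_zero (hx0 u huT) (Finset.prod_ne_zero_iff.2 ?_)) hzero
    intro t ht
    obtain ⟨htu, htS⟩ := Finset.mem_erase.1 ht
    have htT : t ∈ T := (Finset.mem_filter.1 htS).1
    simp only [eval_sub, eval_X, eval_C, sub_ne_zero]
    exact fun h => htu (hx htT huT h.symm)
  · intro t htT htu
    by_cases hwt : w t = 0
    · simp [hwt]
    · have : t ∈ S.erase u := by simp [hS, htT, htu, hwt]
      rw [hQ, eval_mul, eval_prod, Finset.prod_eq_zero this (by simp)]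
      simp

/-- Divisibility by `X ^ m - c` forces a power-sum relation on every residue class mod `m`. -/
lemma sum_residue_eq_zero_of_dvd {n m : ℕ} (hm : 0 < m) (v : Fin n → F) (c : F)
    (h : X ^ m - C c ∣ wordPoly v) (a : ℕ) :
    ∑ i with (i : Fin n).val % m = a, v i * c ^ ((i : ℕ) / m) = 0 := by
  set p : F[X] := ∑ i : Fin n, C (v i * c ^ ((i : ℕ) / m)) * X ^ ((i : ℕ) % m) with hp
  have hdiff : X ^ m - C c ∣ wordPoly v - p := by
    rw [wordPoly, hp, ← Finset.sum_sub_distrib]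
    refine Finset.dvd_sum fun i _ => ?_
    have : C (v i) * X ^ (i : ℕ) - C (v i * c ^ ((i : ℕ) / m)) * X ^ ((i : ℕ) % m) =
        C (v i) * X ^ ((i : ℕ) % m) * ((X ^ m) ^ ((i : ℕ) / m) - C c ^ ((i : ℕ) / m)) := by
      conv_lhs => rw [← Nat.mod_add_div (i : ℕ) m]
      simp only [Nat.add_mul_mod_self_left, Nat.mod_mod, Nat.add_mul_div_left _ _ hm,
        Nat.div_eq_of_lt (Nat.mod_lt _ hm), C_mul, C_pow, pow_add, pow_mul, zero_add]
      ring
    rw [this]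
    exact (sub_dvd_pow_sub_pow _ _ _).mul_left _
  have hdvd : X ^ m - C c ∣ p := by
    simpa using dvd_sub h hdiff
  have hp0 : p = 0 := by
    refine eq_zero_of_dvd_of_degree_lt hdvd ?_
    rw [degree_X_pow_sub_C hm, degree_lt_iff_coeff_zero]
    intro k hk
    rw [hp, finsetSum_coeff]
    refine Finset.sum_eq_zero fun i _ => ?_
    have : k ≠ (i : ℕ) % m := by have := Nat.mod_lt (i : ℕ) hm; omega
    rw [coeff_C_mul, coeff_X_pow, if_neg this, mul_zero]
  have hcoeff := congrArg (fun f => f.coeff a) hp0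
  simp only [hp, finsetSum_coeff, coeff_C_mul, coeff_X_pow, coeff_zero, mul_ite, mul_one,
    mul_zero] at hcoeff
  rw [Finset.sum_filter]
  simpa only [eq_comm (a := a)] using hcoeff

/-- A finite field contains primitive roots of unity of every order dividing `q - 1`. -/
lemma exists_isPrimitiveRoot_of_dvd_card_sub_one [Fintype F] {l : ℕ}
    (hl : l ∣ Fintype.card F - 1) : ∃ β : F, IsPrimitiveRoot β l := by
  obtain ⟨u, hu⟩ := IsCyclic.exists_ofOrder_eq_natCard (α := Fˣ)
  rw [Nat.card_eq_fintype_card, Fintype.card_units] at hu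
  obtain ⟨e, he⟩ := hl
  have h := IsPrimitiveRoot.orderOf u
  rw [hu] at h
  have hpos : 0 < Fintype.card F - 1 := by
    have := Fintype.one_lt_card (α := F); omega
  exact ⟨_, (h.pow hpos (he.trans (mul_comm _ _))).map_of_injective Units.coeHom_injective⟩

lemma prod_X_pow_sub_C_dvd {γ : F} {l m d : ℕ} (hγ : IsPrimitiveRoot γ l) (hd : d ≤ l) :
    ∏ j ∈ Finset.Ico 1 d, (X ^ m - C (γ ^ j)) ∣ (X ^ (m * l) - 1 : F[X]) := by
  have h : ∏ j ∈ Finset.Ico 1 d, (X - C (γ ^ j)) ∣ (X ^ l - 1 : F[X]) := by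
    refine Finset.prod_dvd_of_coprime ?_ fun j _ => ?_
    · intro i hi j hj hij
      refine isCoprime_X_sub_C_of_isUnit_sub (sub_ne_zero.2 fun h => hij ?_).isUnit
      simp only [Finset.coe_Ico, Set.mem_Ico] at hi hj
      exact hγ.pow_inj (by omega) (by omega) h
    · rw [dvd_iff_isRoot]
      simp [← pow_mul, mul_comm j l, pow_mul γ l, hγ.pow_eq_one]
  simpa [map_prod, ← pow_mul] using map_dvd (expand F m) h

/-- The generator polynomial: full cosets of zeros give the locality, and the extra zeros
raise the distance of single-block words to `d`. -/
noncomputable def lrcGenerator (β : F) (m δ d : ℕ) : F[X] :=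
  (∏ j ∈ Finset.Ico 1 δ, (X ^ m - C ((β ^ m) ^ j))) * ∏ j ∈ Finset.Ico δ d, (X - C (β ^ j))

lemma lrcGenerator_monic (β : F) {m : ℕ} (hm : 0 < m) (δ d : ℕ) :
    (lrcGenerator β m δ d).Monic :=
  (monic_prod_of_monic _ _ fun _ _ => monic_X_pow_sub_C _ hm.ne').mul
    (monic_prod_of_monic _ _ fun _ _ => monic_X_sub_C _)

lemma natDegree_lrcGenerator (β : F) {m : ℕ} (hm : 0 < m) (δ d : ℕ) :
    (lrcGenerator β m δ d).natDegree = (δ - 1) * m + (d - δ) := by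
  rw [lrcGenerator, Monic.natDegree_mul
      (monic_prod_of_monic _ _ fun _ _ => monic_X_pow_sub_C _ hm.ne')
      (monic_prod_of_monic _ _ fun _ _ => monic_X_sub_C _),
    natDegree_prod_of_monic _ _ fun _ _ => monic_X_pow_sub_C _ hm.ne',
    natDegree_prod_of_monic _ _ fun _ _ => monic_X_sub_C _]
  simp only [natDegree_X_pow_sub_C, natDegree_X_sub_C, Finset.sum_const, Nat.card_Ico,
    smul_eq_mul, mul_one]

lemma lrcGenerator_dvd_prod (β : F) (m : ℕ) {δ d : ℕ} (hδ : 1 ≤ δ) (hd : δ ≤ d) :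
    lrcGenerator β m δ d ∣ ∏ j ∈ Finset.Ico 1 d, (X ^ m - C ((β ^ m) ^ j)) := by
  rw [lrcGenerator, ← Finset.prod_Ico_consecutive _ hδ hd]
  refine mul_dvd_mul_left _ (Finset.prod_dvd_prod_of_dvd _ _ fun j _ => ?_)
  have h := sub_dvd_pow_sub_pow X (C (β ^ j)) m
  rwa [← C_pow, pow_right_comm] at h

lemma injOn_pow_div {γ : F} {n m l a : ℕ} (hγ : IsPrimitiveRoot γ l) (hn : n = m * l) :
    Set.InjOn (fun i : Fin n => γ ^ ((i : ℕ) / m))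
      (Finset.univ.filter fun i : Fin n => (i : ℕ) % m = a) := by
  intro i hi j hj hij
  simp only [Finset.coe_filter, Finset.mem_univ, true_and, Set.mem_ofPred_eq] at hi hj
  have hlt : ∀ i : Fin n, (i : ℕ) / m < l := fun i =>
    Nat.div_lt_of_lt_mul (hn ▸ i.2)
  have h := hγ.pow_inj (hlt i) (hlt j) hij
  apply Fin.ext
  rw [← Nat.mod_add_div (i : ℕ) m, ← Nat.mod_add_div (j : ℕ) m, hi, hj, h]

lemma card_residue_le {n m l a : ℕ} (hn : n = m * l) :
    (Finset.univ.filter fun i : Fin n => (i : ℕ) % m = a).card ≤ l := by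
  rw [← Finset.card_range l]
  refine Finset.card_le_card_of_injOn (fun i => (i : ℕ) / m) (fun i _ => ?_) ?_
  · simpa using Nat.div_lt_of_lt_mul (hn ▸ i.2)
  · intro i hi j hj hij
    simp only [Finset.coe_filter, Finset.mem_univ, true_and, Set.mem_ofPred_eq] at hi hj
    apply Fin.ext
    rw [← Nat.mod_add_div (i : ℕ) m, ← Nat.mod_add_div (j : ℕ) m, hi, hj]
    exact congrArg (fun x => a + m * x) hij

section Weights

variable {β : F} {n m l δ d : ℕ}

/-- Every nonzero block of a codeword has weight at least `δ`. -/
lemma le_card_block (hm : 0 < m) (hn : n = m * l) (hγ : IsPrimitiveRoot (β ^ m) l)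
    (hl : 0 < l) {v : Fin n → F} (hv : lrcGenerator β m δ d ∣ wordPoly v) (a : ℕ)
    (ha : ∃ i ∈ Finset.univ.filter (fun i : Fin n => (i : ℕ) % m = a), v i ≠ 0) :
    δ ≤ ((Finset.univ.filter fun i : Fin n => (i : ℕ) % m = a).filter
      fun i => v i ≠ 0).card := by
  have := lt_card_support_of_power_sums _ v (fun i : Fin n => (β ^ m) ^ ((i : ℕ) / m)) (δ - 1)
    (injOn_pow_div (a := a) hγ hn) (fun t _ => pow_ne_zero _ (hγ.ne_zero hl.ne')) ?_ ha
  · omega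
  · intro j hj1 hj2
    have hdvd : X ^ m - C ((β ^ m) ^ j) ∣ wordPoly v :=
      (Finset.dvd_prod_of_mem (fun j => X ^ m - C ((β ^ m) ^ j))
        (Finset.mem_Ico.2 ⟨hj1, by omega⟩)).trans ((dvd_mul_right _ _).trans hv)
    rw [← sum_residue_eq_zero_of_dvd hm v _ hdvd a]
    exact Finset.sum_congr rfl fun i _ => by rw [pow_right_comm]

/-- A nonzero codeword supported on a single block has weight at least `d`. -/
lemma le_card_of_single_block (hm : 0 < m) (hn : n = m * l) (hγ : IsPrimitiveRoot (β ^ m) l)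
    (hβ : β ≠ 0) {v : Fin n → F} (hv : lrcGenerator β m δ d ∣ wordPoly v)
    (a : ℕ) (hsupp : ∀ i : Fin n, v i ≠ 0 → (i : ℕ) % m = a) (hv0 : v ≠ 0) :
    d ≤ wt v := by
  obtain ⟨i₀, hi₀⟩ := Function.ne_iff.1 hv0
  have := lt_card_support_of_power_sums _ v (fun i : Fin n => (β ^ m) ^ ((i : ℕ) / m)) (d - 1)
    (injOn_pow_div (a := a) hγ hn) (fun t _ => pow_ne_zero _ (pow_ne_zero _ hβ)) ?_
    ⟨i₀, by simpa using hsupp i₀ hi₀, hi₀⟩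
  · have hle := Finset.card_le_card (Finset.filter_subset_filter (fun i => v i ≠ 0)
      (Finset.filter_subset (fun i : Fin n => (i : ℕ) % m = a) Finset.univ))
    rw [wt]
    omega
  · intro j hj1 hj2
    by_cases hjδ : j < δ
    · have hdvd : X ^ m - C ((β ^ m) ^ j) ∣ wordPoly v :=
        (Finset.dvd_prod_of_mem (fun j => X ^ m - C ((β ^ m) ^ j))
          (Finset.mem_Ico.2 ⟨hj1, hjδ⟩)).trans ((dvd_mul_right _ _).trans hv)
      rw [← sum_residue_eq_zero_of_dvd hm v _ hdvd a]
      exact Finset.sum_congr rfl fun i _ => by rw [pow_right_comm]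
    · have hdvd : X - C (β ^ j) ∣ wordPoly v :=
        (Finset.dvd_prod_of_mem (fun j => X - C (β ^ j))
          (Finset.mem_Ico.2 ⟨not_lt.1 hjδ, by omega⟩)).trans ((dvd_mul_left _ _).trans hv)
      have heval := dvd_iff_isRoot.1 hdvd
      simp only [IsRoot.def, wordPoly, eval_finsetSum, eval_mul, eval_C, eval_pow,
        eval_X] at heval
      have hfactor : (β ^ j) ^ a * ∑ i with (i : Fin n).val % m = a,
          v i * ((β ^ m) ^ ((i : ℕ) / m)) ^ j = 0 := by
        rw [← heval, Finset.mul_sum, Finset.sum_filter]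
        refine Finset.sum_congr rfl fun i _ => ?_
        split_ifs with hi
        · conv_rhs => rw [← Nat.mod_add_div (i : ℕ) m, hi]
          ring
        · rw [not_not.1 fun h => hi (hsupp i h), zero_mul]
      exact (mul_eq_zero.1 hfactor).resolve_left (pow_ne_zero _ (pow_ne_zero _ hβ))

lemma le_wt_of_lrcGenerator_dvd (hm : 0 < m) (hn : n = m * l) (hl : 0 < l)
    (hγ : IsPrimitiveRoot (β ^ m) l) (hβ : β ≠ 0) (hd : d ≤ 2 * δ) {v : Fin n → F}
    (hv : lrcGenerator β m δ d ∣ wordPoly v) (hv0 : v ≠ 0) : d ≤ wt v := by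
  obtain ⟨i, hi⟩ := Function.ne_iff.1 hv0
  by_cases hsingle : ∀ j : Fin n, v j ≠ 0 → (j : ℕ) % m = (i : ℕ) % m
  · exact le_card_of_single_block hm hn hγ hβ hv _ hsingle hv0
  push Not at hsingle
  obtain ⟨j, hj, hji⟩ := hsingle
  have h1 := le_card_block hm hn hγ hl hv (i % m) ⟨i, by simp, hi⟩
  have h2 := le_card_block hm hn hγ hl hv (j % m) ⟨j, by simp, hj⟩
  have hdisj : Disjoint
      ((Finset.univ.filter fun k : Fin n => (k : ℕ) % m = (i : ℕ) % m).filter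
        fun k => v k ≠ 0)
      ((Finset.univ.filter fun k : Fin n => (k : ℕ) % m = (j : ℕ) % m).filter
        fun k => v k ≠ 0) := by
    rw [Finset.disjoint_left]
    intro k hk hk'
    simp only [Finset.mem_filter, Finset.mem_univ, true_and] at hk hk'
    exact hji (hk'.1.symm.trans hk.1)
  have hle := Finset.card_le_card (Finset.union_subset
    (Finset.filter_subset_filter (fun k => v k ≠ 0) (Finset.subset_univ
      (Finset.univ.filter fun k : Fin n => (k : ℕ) % m = (i : ℕ) % m)))
    (Finset.filter_subset_filter (fun k => v k ≠ 0) (Finset.subset_univ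
      (Finset.univ.filter fun k : Fin n => (k : ℕ) % m = (j : ℕ) % m))))
  rw [Finset.card_union_of_disjoint hdisj] at hle
  rw [wt]
  omega

/-- The word of `∏ j ∈ [1, d), (X ^ m - β ^ (m * j))` has weight at most `d`. -/
lemma exists_word_wt_le (hm : 0 < m) (hn : n = m * l) (hδ : 1 ≤ δ) (hδd : δ ≤ d)
    (hdl : d ≤ l) : ∃ v : Fin n → F, v ≠ 0 ∧ lrcGenerator β m δ d ∣ wordPoly v ∧ wt v ≤ d := by
  set P : F[X] := ∏ j ∈ Finset.Ico 1 d, (X - C ((β ^ m) ^ j)) with hP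
  have hPdeg : P.natDegree = d - 1 := by
    rw [hP, natDegree_prod_of_monic _ _ fun _ _ => monic_X_sub_C _]
    simp only [natDegree_X_sub_C, Finset.sum_const, Nat.card_Ico, smul_eq_mul, mul_one]
  have hPmonic : P.Monic := monic_prod_of_monic _ _ fun _ _ => monic_X_sub_C _
  have hQ : expand F m P = ∏ j ∈ Finset.Ico 1 d, (X ^ m - C ((β ^ m) ^ j)) := by
    simp [hP, map_prod]
  have hQ0 : expand F m P ≠ 0 := (hPmonic.expand hm).ne_zero
  have hQdeg : (expand F m P).degree < n := by
    rw [← natDegree_lt_iff_degree_lt hQ0, natDegree_expand, hPdeg, hn, mul_comm]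
    exact Nat.mul_lt_mul_of_pos_left (by omega) hm
  have hword := wordPoly_coeff hQdeg
  refine ⟨fun i => (expand F m P).coeff i, ?_, ?_, ?_⟩
  · intro h
    rw [h] at hword
    exact hQ0 (by rw [← hword]; simp [wordPoly])
  · rw [hword, hQ]
    exact lrcGenerator_dvd_prod β m hδ hδd
  · rw [wt, ← Finset.card_range d]
    refine Finset.card_le_card_of_injOn (fun i => (i : ℕ) / m) (fun i hi => ?_) ?_
    · simp only [Finset.coe_filter, Finset.mem_univ, true_and, Set.mem_ofPred_eq,
        coeff_expand hm, ne_eq, ite_eq_right_iff, not_forall] at hi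
      obtain ⟨_, hi⟩ := hi
      have := le_natDegree_of_ne_zero hi
      simp only [Finset.coe_range, Set.mem_Iio]
      omega
    · intro i hi j hj hij
      simp only [Finset.coe_filter, Finset.mem_univ, true_and, Set.mem_ofPred_eq,
        coeff_expand hm, ne_eq, ite_eq_right_iff, not_forall] at hi hj
      exact Fin.ext ((Nat.div_left_inj hi.1 hj.1).1 hij)

end Weights

lemma isOptimalParams_of_dist_between {m r δ d : ℕ} (hm : 0 < m) (hδ : 1 ≤ δ) (hd : δ ≤ d)
    (hr : d - δ < r) : IsOptimalParams (m * (r + δ - 1)) (r * m - (d - δ)) d r δ := by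
  have hle : d - δ ≤ r * m := hr.le.trans (Nat.le_mul_of_pos_right r hm)
  have hr0 : (0 : ℚ) < r := by exact_mod_cast (Nat.zero_le _).trans_lt hr
  have hceil : ⌈((r * m - (d - δ) : ℕ) : ℚ) / (r : ℚ)⌉ = m := by
    have h1 : ((d - δ : ℕ) : ℚ) < r := by exact_mod_cast hr
    have h2 : (0 : ℚ) ≤ ((d - δ : ℕ) : ℚ) := Nat.cast_nonneg _
    rw [Int.ceil_eq_iff, Nat.cast_sub hle, lt_div_iff₀ hr0, div_le_iff₀ hr0]
    push_cast
    constructor <;> nlinarith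
  rw [IsOptimalParams, hceil, Nat.cast_sub hle, Nat.cast_sub hd, Nat.cast_mul,
    Nat.cast_sub (by omega)]
  push_cast
  ring

end CyclicLRC

/-- **Remark 3.** For any `δ + 1 ≤ d ≤ 2δ` and `r ≥ d - δ + 1`, if `gcd(n,q) = 1`,
`(r+δ-1) ∣ gcd(n, q-1)` and `gcd(n/(r+δ-1), r+δ-1) = 1`, then there exists a `q`-ary
optimal cyclic `(r,δ)`-LRC of length `n`, dimension `k = rn/(r+δ-1) - (d-δ)` and minimum
distance `d`, achieving the Singleton-type bound. -/
theorem exists_optimal_cyclic_LRC_dist_between (F : Type*) [Field F] [Fintype F]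
    (q n r δ d : ℕ) (hq : Fintype.card F = q) [NeZero n] (hcop : Nat.Coprime n q)
    (hδ : 2 ≤ δ) (hd1 : δ + 1 ≤ d) (hd2 : d ≤ 2 * δ) (hr : d - δ + 1 ≤ r)
    (hdvd : (r + δ - 1) ∣ Nat.gcd n (q - 1))
    (hgcd : Nat.gcd (n / (r + δ - 1)) (r + δ - 1) = 1) :
    ∃ C : Submodule F (Fin n → F),
      IsCyclic' C ∧
      Module.finrank F C = r * n / (r + δ - 1) - (d - δ) ∧
      MinDistIs (C : Set (Fin n → F)) d ∧
      HasLocality (C : Set (Fin n → F)) r δ ∧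
      IsOptimalParams n (r * n / (r + δ - 1) - (d - δ)) d r δ := by
  have hln : r + δ - 1 ∣ n := hdvd.trans (Nat.gcd_dvd_left _ _)
  have hlq : r + δ - 1 ∣ q - 1 := hdvd.trans (Nat.gcd_dvd_right _ _)
  have hl : 0 < r + δ - 1 := by omega
  obtain ⟨m, hm⟩ := hln
  have hn : n = m * (r + δ - 1) := by rw [hm, mul_comm]
  have hm0 : 0 < m := Nat.pos_of_ne_zero fun h => NeZero.ne n (by rw [hn, h, zero_mul])
  have hcopm : m.Coprime (r + δ - 1) := by
    rwa [hn, Nat.mul_div_cancel _ hl] at hgcd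
  obtain ⟨β, hβ⟩ := exists_isPrimitiveRoot_of_dvd_card_sub_one (F := F) (hq ▸ hlq)
  have hβ0 : β ≠ 0 := hβ.ne_zero hl.ne'
  have hγ : IsPrimitiveRoot (β ^ m) (r + δ - 1) := hβ.pow_of_coprime m hcopm
  have hk : r * n / (r + δ - 1) = r * m := by
    rw [hn, ← mul_assoc, Nat.mul_div_cancel _ hl]
  have hdeg := natDegree_lrcGenerator β hm0 δ d
  have hsplit : n = r * m + (δ - 1) * m := by
    rw [hn, ← add_mul, mul_comm]; congr 1; omega
  have hle : d - δ ≤ r * m := (by omega : d - δ ≤ r).trans (Nat.le_mul_of_pos_right r hm0)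
  obtain ⟨K, hfin, hmem⟩ :=
    exists_submodule_of_monic (lrcGenerator_monic β hm0 δ d) (n := n) (by omega)
  rw [hk]
  refine ⟨K, ?_, by omega, ⟨?_, ?_⟩, ?_, ?_⟩
  · intro v hv
    rw [hmem] at hv ⊢
    rw [wordPoly_shift]
    refine dvd_sub (hv.mul_left _) (Dvd.dvd.mul_left ?_ _)
    rw [hn]
    exact (lrcGenerator_dvd_prod β m (by omega) (by omega)).trans
      (prod_X_pow_sub_C_dvd hγ (by omega))
  · intro v hv hv0
    exact le_wt_of_lrcGenerator_dvd hm0 hn hl hγ hβ0 hd2 ((hmem v).1 hv) hv0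
  · obtain ⟨v, hv0, hv, hwt⟩ := exists_word_wt_le (β := β) (δ := δ) (d := d) hm0 hn
      (by omega) (by omega) (by omega)
    exact ⟨v, (hmem v).2 hv, hv0,
      hwt.antisymm (le_wt_of_lrcGenerator_dvd hm0 hn hl hγ hβ0 hd2 hv hv0)⟩
  · intro i
    exact ⟨Finset.univ.filter fun j : Fin n => (j : ℕ) % m = (i : ℕ) % m, by simp,
      card_residue_le hn, fun v hv h => le_card_block hm0 hn hγ hl ((hmem v).1 hv) _ h⟩
  · have h := isOptimalParams_of_dist_between hm0 (by omega : 1 ≤ δ) (by omega : δ ≤ d)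
      (by omega : d - δ < r)
    rwa [← hn] at h
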